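/- Let (E, ρ) be a q-polymatroid with denominator μ. Then for every subspace V of E, ρ(V) = max{ρ(I) : I ≤ V, I μ-independent}. -/

import Mathlib

open Module

/-- A subspace `I` is `μ`-independent in the `q`-polymatroid `(E, ρ)` if
`ρ(J) ≥ dim J / μ` for all subspaces `J ≤ I`. -/
def IsMuIndep {𝔽 E : Type*} [Field 𝔽] [AddCommGroup E] [Module 𝔽 E]
    (μ : ℚ) (ρ : Submodule 𝔽 E → ℚ) (I : Submodule 𝔽 E) : Prop :=
  ∀ J ≤ I, (finrank 𝔽 J : ℚ) / μ ≤ ρ J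

/-!
Among the subspaces of `V` with rank `ρ V`, take a minimal one, `I`: passing to any proper subspace
of `I` lowers `ρ`. For `K < J ≤ I`, a relative complement `H` of `J` in the interval `[K, I]` is a
proper subspace of `I`, and submodularity `ρ I + ρ K ≤ ρ J + ρ H` turns `ρ H < ρ I` into
`ρ K < ρ J`. So `ρ` is strictly increasing below `I`. Since `μρ` takes natural number values, it
grows by at least `1` at each step of a chain of subspaces of `J ≤ I`, hence `dim J ≤ μ ρ J`.
-/

theorem exists_le_eq_forall_lt_of_monotone {α β : Type*} [Preorder α] [PartialOrder β]
    {f : α → β} (hf : Monotone f) (a : α) [WellFoundedLT (Set.Iic a)] :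
    ∃ b ≤ a, f b = f a ∧ ∀ c < b, f c < f b := by
  obtain ⟨⟨b, hba⟩, hfb, hmin⟩ := exists_minimal_of_wellFoundedLT
    (fun b : Set.Iic a => f b = f a) ⟨⟨a, le_rfl⟩, rfl⟩
  refine ⟨b, hba, hfb, fun c hcb => (hf hcb.le).lt_of_ne fun hfc => hcb.not_ge ?_⟩
  exact hmin (y := ⟨c, hcb.le.trans hba⟩) (hfc.trans hfb) hcb.le

theorem strictMonoOn_Iic_of_submodular_of_forall_lt {α β : Type*} [Lattice α] [BoundedOrder α]
    [IsModularLattice α] [ComplementedLattice α] [AddCommMonoid β] [PartialOrder β]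
    [IsOrderedCancelAddMonoid β] {f : α → β} (hsub : ∀ x y, f (x ⊔ y) + f (x ⊓ y) ≤ f x + f y)
    {a : α} (ha : ∀ b < a, f b < f a) : StrictMonoOn f (Set.Iic a) := by
  intro x _ y hya hxy
  obtain ⟨z, hinf, hsup⟩ := IsModularLattice.exists_inf_eq_and_sup_eq hxy.le hya
  have hza : z < a := by
    refine (hsup ▸ le_sup_right).lt_of_ne fun hz => hxy.ne ?_
    rw [← hinf, hz, inf_eq_left.mpr hya]
  refine lt_of_add_lt_add_left (a := f z) ?_
  calc
    f z + f x < f a + f x := by gcongr; exact ha z hza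
    _ = f (y ⊔ z) + f (y ⊓ z) := by rw [hsup, hinf]
    _ ≤ f y + f z := hsub y z
    _ = f z + f y := add_comm _ _

theorem height_le_height_apply_of_strictMonoOn_Iic {α β : Type*} [Preorder α] [Preorder β]
    {f : α → β} {a : α} (hf : StrictMonoOn f (Set.Iic a)) :
    Order.height a ≤ Order.height (f a) := by
  refine Order.height_le fun p hp => ?_
  have hpa (i) : p i ≤ a := hp ▸ LTSeries.monotone p (Fin.le_last i)
  let q : LTSeries β := ⟨p.length, f ∘ p, fun i => hf (hpa _) (hpa _) (p.step i)⟩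
  exact Order.length_le_height (p := q) (congrArg f hp).le

theorem finrank_le_apply_of_strictMonoOn_Iic {K M : Type*} [DivisionRing K] [AddCommGroup M]
    [Module K M] {f : Submodule K M → ℕ} {N : Submodule K M}
    (hf : StrictMonoOn f (Set.Iic N)) : finrank K N ≤ f N := by
  by_cases hN : Module.Finite K N
  · have hlength := height_le_height_apply_of_strictMonoOn_Iic hf
    rw [← length_submodule, length_eq_finrank, Order.height_nat] at hlength
    exact_mod_cast hlength
  · rw [finrank_of_not_finite hN]
    exact Nat.zero_le _

theorem isMuIndep_of_strictMonoOn_Iic {𝔽 E : Type*} [Field 𝔽] [AddCommGroup E] [Module 𝔽 E]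
    {ρ : Submodule 𝔽 E → ℚ} {μ : ℚ} (hμ : 0 < μ) (hden : ∀ V, ∃ n : ℕ, μ * ρ V = n)
    {I : Submodule 𝔽 E} (hρ : StrictMonoOn ρ (Set.Iic I)) : IsMuIndep μ ρ I := by
  intro J hJ
  choose f hf using hden
  have hmono : StrictMonoOn f (Set.Iic I) := fun K hK L hL hKL => by
    have hlt : μ * ρ K < μ * ρ L := mul_lt_mul_of_pos_left (hρ hK hL hKL) hμ
    rw [hf, hf] at hlt
    exact_mod_cast hlt
  rw [div_le_iff₀' hμ, hf]
  exact_mod_cast finrank_le_apply_of_strictMonoOn_Iic (hmono.mono (Set.Iic_subset_Iic.mpr hJ))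

theorem qpm_rank_eq_max_indep_general {𝔽 E : Type*} [Field 𝔽] [AddCommGroup E] [Module 𝔽 E]
    {ρ : Submodule 𝔽 E → ℚ} (hmono : Monotone ρ)
    (hsub : ∀ V W, ρ (V ⊔ W) + ρ (V ⊓ W) ≤ ρ V + ρ W)
    {μ : ℚ} (hμ : 0 < μ) (hden : ∀ V, ∃ n : ℕ, μ * ρ V = n)
    (V : Submodule 𝔽 E) [FiniteDimensional 𝔽 V] :
    IsGreatest {x : ℚ | ∃ I ≤ V, IsMuIndep μ ρ I ∧ x = ρ I} (ρ V) := by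
  have : WellFoundedLT (Set.Iic V) := V.mapIic.symm.strictMono.wellFoundedLT
  obtain ⟨I, hIV, hρI, hdrop⟩ := exists_le_eq_forall_lt_of_monotone hmono V
  have hstrict := strictMonoOn_Iic_of_submodular_of_forall_lt hsub hdrop
  refine ⟨⟨I, hIV, isMuIndep_of_strictMonoOn_Iic hμ hden hstrict, hρI.symm⟩, ?_⟩
  rintro _ ⟨J, hJV, -, rfl⟩
  exact hmono hJV

theorem qpm_rank_eq_max_indep
    {𝔽 E : Type*} [Field 𝔽] [Fintype 𝔽] [AddCommGroup E] [Module 𝔽 E]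
    [FiniteDimensional 𝔽 E] (ρ : Submodule 𝔽 E → ℚ)
    (hR1 : ∀ V : Submodule 𝔽 E, 0 ≤ ρ V ∧ ρ V ≤ (finrank 𝔽 V : ℚ))
    (hR2 : ∀ V W : Submodule 𝔽 E, V ≤ W → ρ V ≤ ρ W)
    (hR3 : ∀ V W : Submodule 𝔽 E, ρ (V ⊔ W) + ρ (V ⊓ W) ≤ ρ V + ρ W)
    (μ : ℚ) (hμ : 0 < μ) (hden : ∀ V : Submodule 𝔽 E, ∃ n : ℕ, μ * ρ V = n) :
    ∀ V : Submodule 𝔽 E,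
      IsGreatest {x : ℚ | ∃ I ≤ V, IsMuIndep μ ρ I ∧ x = ρ I} (ρ V) := fun V =>
  qpm_rank_eq_max_indep_general hR2 hR3 hμ hden V
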